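/- For every well-formed formula Q and all well-formed formulas A, B of the implicational propositional calculus, the formula QQB ⊃ QQ(A ⊃ B) is a theorem of IPC. -/

import Mathlib

/-- Well-formed formulas of the implicational propositional calculus:
propositional variables (indexed by ℕ, so the set of wfs is countable)
and the single connective ⊃. -/
inductive Wf where
  | var : ℕ → Wf
  | imp : Wf → Wf → Wf
deriving DecidableEq

infixr:60 " ⊃' " => Wf.imp

/-- `Deduces Γ A` : `A` is deducible from the set `Γ` of extra axioms/hypotheses,
using the three axiom schemes of IPC (including the Peirce scheme) and modus ponens.
Theorems of IPC are `Deduces ∅ A`; for an extension `M` of IPC with extra-axiom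
set `E`, `T(M)` is `Deduces E`, and deducibility from hypotheses `Γ` in `M` is
`Deduces (E ∪ Γ)`. -/
inductive Deduces : Set Wf → Wf → Prop where
  | hyp : ∀ {Γ : Set Wf} {A : Wf}, A ∈ Γ → Deduces Γ A
  | ax1 : ∀ {Γ : Set Wf} (A B : Wf), Deduces Γ (A ⊃' (B ⊃' A))
  | ax2 : ∀ {Γ : Set Wf} (A B C : Wf),
      Deduces Γ ((A ⊃' (B ⊃' C)) ⊃' ((A ⊃' B) ⊃' (A ⊃' C)))
  | peirce : ∀ {Γ : Set Wf} (A B : Wf), Deduces Γ (((A ⊃' B) ⊃' A) ⊃' A)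
  | mp : ∀ {Γ : Set Wf} {A B : Wf}, Deduces Γ (A ⊃' B) → Deduces Γ A → Deduces Γ B

/-- Suffixing rule: from X ⊃ Y infer (Y ⊃ Z) ⊃ (X ⊃ Z). -/
theorem Deduces.suffix_rule {Γ : Set Wf} {X Y : Wf} (h : Deduces Γ (X ⊃' Y)) (Z : Wf) :
    Deduces Γ ((Y ⊃' Z) ⊃' (X ⊃' Z)) := by
  have h1 : Deduces Γ ((Y ⊃' Z) ⊃' ((X ⊃' Y) ⊃' (X ⊃' Z))) :=
    .mp (.mp (.ax2 _ _ _) (.mp (.ax1 _ _) (.ax2 X Y Z))) (.ax1 _ _)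
  exact .mp (.mp (.ax2 _ _ _) h1) (.mp (.ax1 _ _) h)

/-- Theorem 1(5): QQB ⊃ QQ(A ⊃ B) is a theorem of IPC. -/
theorem stmt_4 (Q A B : Wf) :
    Deduces ∅ (((B ⊃' Q) ⊃' Q) ⊃' (((A ⊃' B) ⊃' Q) ⊃' Q)) := by
  exact ((Deduces.ax1 B A).suffix_rule Q).suffix_rule Q
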